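/- Under the hypotheses of Lemma 3.7 with additionally sᵀM₂s = 0 and rᵀM₀r ≠ 0, if b(z) = z²(s + α r) for some scalar α, then the power series solution t(z) of M(z)t(z) = b(z) has leading coefficient t₀ = −(sᵀs)(rᵀM₀r) / ((sᵀM₁r)(rᵀM₁s)) · s, which is nonzero. -/

import Mathlib

open Matrix

/-!
Let `P` be the matrix with rows `s, r` and `D(z) = diag(z, 1)`. Since `M₀s = 0`, `sᵀM₀ = 0` and
`sᵀM₁s = 0`, one can factor `P M(z) Pᵀ = D(z) N(z) D(z)` with `N` a convergent power series whose
value at `0` is `𝓜₀`. As `𝓜₀` is invertible, so is `N` over the ring of convergent power series,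
and with `D'(z) = diag(1, z)`, for which `D D' = z`, the matrix `Pᵀ D' N⁻¹ D' P` is a convergent
right inverse of `M(z)` up to the factor `z²`. Its value at `0` is
`(rᵀM₀r / det 𝓜₀) s sᵀ`, from which the leading coefficient is read off.
-/

open scoped PowerSeries nonZeroDivisors

section Factorization

variable {n R : Type*} [Fintype n] [DecidableEq n] [CommRing R]
  {P M Q D D' N N' : Matrix n n R} {z : R}

theorem det_left_mem_nonZeroDivisors_of_factorization (hz : z ∈ R⁰)
    (hfac : P * M * Q = D * N * D) (hD : D * D' = z • 1) (hN : N * N' = 1) : P.det ∈ R⁰ := by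
  have hdetD : D.det ∈ R⁰ := by
    have : D.det * D'.det ∈ R⁰ := by
      rw [← det_mul, hD, det_smul, det_one, mul_one]
      exact pow_mem hz _
    exact (mul_mem_nonZeroDivisors.1 this).1
  have hdetN : N.det ∈ R⁰ := (isUnit_det_of_right_inverse hN).mem_nonZeroDivisors
  have hdet : P.det * M.det * Q.det = D.det * N.det * D.det := by
    rw [← det_mul, ← det_mul, hfac, det_mul, det_mul]
  have hmem : P.det * M.det * Q.det ∈ R⁰ := hdet ▸ mul_mem (mul_mem hdetD hdetN) hdetD
  exact (mul_mem_nonZeroDivisors.1 (mul_mem_nonZeroDivisors.1 hmem).1).1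

theorem mul_eq_sq_smul_one_of_factorization (hz : z ∈ R⁰) (hfac : P * M * Q = D * N * D)
    (hD : D * D' = z • 1) (hN : N * N' = 1) : M * (Q * D' * N' * D' * P) = z ^ 2 • 1 := by
  have hP : IsLeftRegular P.det := (isRegular_iff_mem_nonZeroDivisors.2
    (det_left_mem_nonZeroDivisors_of_factorization hz hfac hD hN)).left
  refine (isRegular_of_isLeftRegular_det hP).left ?_
  calc P * (M * (Q * D' * N' * D' * P))
      = P * M * Q * D' * N' * D' * P := by simp only [Matrix.mul_assoc]
    _ = D * N * (D * D') * N' * D' * P := by rw [hfac]; simp only [Matrix.mul_assoc]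
    _ = z • (D * (N * N') * D' * P) := by rw [hD]; simp [Matrix.mul_assoc]
    _ = P * (z ^ 2 • 1) := by simp [hN, hD, smul_smul, sq]

end Factorization

theorem map_linearMap_mul_mul {l m n o R A B : Type*} [Fintype m] [Fintype n]
    [CommSemiring R] [Semiring A] [Algebra R A] [Semiring B] [Algebra R B] (f : A →ₗ[R] B)
    (P : Matrix l m R) (M : Matrix m n A) (Q : Matrix n o R) :
    (P.map (algebraMap R A) * M * Q.map (algebraMap R A)).map f =
      P.map (algebraMap R B) * M.map f * Q.map (algebraMap R B) := by
  ext i j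
  simp only [map_apply, mul_apply, map_sum, ← Algebra.smul_def, ← Algebra.commutes, map_smul]

theorem map_nonsing_inv_of_mul_eq_one {n R S : Type*} [Fintype n] [DecidableEq n] [CommRing R]
    [CommRing S] (f : R →+* S) {N : Matrix n n R} (hN : N * N⁻¹ = 1) :
    N⁻¹.map f = (N.map f)⁻¹ := by
  refine (inv_eq_right_inv ?_).symm
  rw [← Matrix.map_mul, hN, Matrix.map_one _ (map_zero f) (map_one f)]

theorem diagonal_mul_fin_two_mul_diagonal {R : Type*} [CommSemiring R] (z a b c d : R) :
    diagonal ![z, 1] * !![a, b; c, d] * diagonal ![z, 1] =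
      !![z ^ 2 * a, z * b; z * c, d] := by
  ext i j
  fin_cases i <;> fin_cases j <;> simp <;> ring

theorem diagonal_mul_diagonal_fin_two {R : Type*} [CommSemiring R] (z : R) :
    diagonal ![z, 1] * diagonal ![1, z] = z • (1 : Matrix (Fin 2) (Fin 2) R) := by
  ext i j
  fin_cases i <;> fin_cases j <;> simp

theorem dotProduct_self_ne_zero_of_det_ne_zero {R : Type*} [CommRing R] [NoZeroDivisors R]
    {s r : Fin 2 → R} (hdet : (of ![s, r]).det ≠ 0) (hsr : s ⬝ᵥ r = 0) : s ⬝ᵥ s ≠ 0 := by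
  intro hss
  have hmulVec : of ![s, r] *ᵥ s = 0 := by
    ext i
    fin_cases i
    exacts [hss, (dotProduct_comm r s).trans hsr]
  have hs : s = 0 := eq_zero_of_mulVec_eq_zero hdet hmulVec
  exact hdet (det_eq_zero_of_row_eq_zero 0 fun j => congrFun hs j)

theorem vecMul_eq_zero_of_range_le_span {m n R : Type*} [Fintype m] [Fintype n] [CommSemiring R]
    {A : Matrix m n R} {s r : m → R} (hA : ∀ v, ∃ c : R, A *ᵥ v = c • r) (hsr : s ⬝ᵥ r = 0) :
    s ᵥ* A = 0 := by
  refine dotProduct_eq_zero _ fun v => ?_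
  obtain ⟨c, hc⟩ := hA v
  rw [← dotProduct_mulVec, hc, dotProduct_smul, hsr, smul_zero]

theorem conj_corner_nonsing_inv_mulVec {K : Type*} [Field K] (N : Matrix (Fin 2) (Fin 2) K)
    (s r w : Fin 2 → K) :
    ((of ![s, r])ᵀ * diagonal ![1, 0] * N⁻¹ * diagonal ![1, 0] * of ![s, r]) *ᵥ w =
      (s ⬝ᵥ w * N 1 1 / N.det) • s := by
  simp only [inv_def, adjugate_fin_two]
  ext i
  fin_cases i <;> simp [mulVec, dotProduct, mul_apply, Fin.sum_univ_two] <;> ring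

theorem le_mul_pow_of_succ_le_sum {u : ℕ → ℝ} {a c R : ℝ} (ha : 0 ≤ a) (hc : 0 ≤ c)
    (hR : 0 ≤ R) (h0 : u 0 ≤ a)
    (hsucc : ∀ m, u (m + 1) ≤ ∑ k ∈ Finset.range (m + 1), c * R ^ (k + 1) * u (m - k)) (n : ℕ) :
    u n ≤ a * (R * (1 + c)) ^ n := by
  induction n using Nat.strong_induction_on with
  | _ n ih =>
    rcases n with _ | m
    · simpa using h0
    · set S := R * (1 + c) with hS
      -- `S` is chosen so that `S - R = R * c`, which makes the sum below telescope.
      have geom_sum : (∑ k ∈ Finset.range (m + 1), R ^ k * S ^ (m - k)) * (S - R) =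
          S ^ (m + 1) - R ^ (m + 1) := by
        have := (Commute.all R S).geom_sum₂_mul (m + 1)
        rw [Nat.add_sub_cancel] at this
        linarith
      calc u (m + 1)
          ≤ ∑ k ∈ Finset.range (m + 1), c * R ^ (k + 1) * u (m - k) := hsucc m
        _ ≤ ∑ k ∈ Finset.range (m + 1), c * R ^ (k + 1) * (a * S ^ (m - k)) := by
            gcongr with k
            exact ih _ (by lia)
        _ = a * ((∑ k ∈ Finset.range (m + 1), R ^ k * S ^ (m - k)) * (S - R)) := by
            rw [Finset.sum_mul, Finset.mul_sum]
            refine Finset.sum_congr rfl fun k _ => ?_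
            rw [hS]
            ring
        _ ≤ a * S ^ (m + 1) := by
            rw [geom_sum]
            gcongr
            exact sub_le_self _ (by positivity)

section ConvergentPowerSeries

variable {𝕜 : Type*} [NormedField 𝕜]

/-- Convergence of a power series in one variable near `0`, encoded as geometric growth of its
coefficients; the radius of convergence is then at least `1 / R`. -/
def IsConvergent (f : 𝕜⟦X⟧) : Prop :=
  ∃ C R : ℝ, 0 < R ∧ ∀ n, ‖PowerSeries.coeff n f‖ ≤ C * R ^ n

namespace IsConvergent

theorem exists_common_bound {ι : Type*} [Finite ι] {f : ι → 𝕜⟦X⟧}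
    (hf : ∀ i, IsConvergent (f i)) :
    ∃ C R : ℝ, 0 ≤ C ∧ 0 < R ∧ ∀ n i, ‖PowerSeries.coeff n (f i)‖ ≤ C * R ^ n := by
  choose C R hR hbound using hf
  obtain ⟨C', hC'⟩ := Finite.exists_le C
  obtain ⟨R', hR'⟩ := Finite.exists_le R
  refine ⟨max C' 0, max R' 1, le_max_right _ _, by positivity, fun n i => ?_⟩
  have hCi : C i ≤ max C' 0 := (hC' i).trans (le_max_left _ _)
  have hRi : R i ≤ max R' 1 := (hR' i).trans (le_max_left _ _)
  have := (hR i).le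
  exact (hbound i n).trans (by gcongr)

theorem exists_common_bound₂ {f g : 𝕜⟦X⟧} (hf : IsConvergent f) (hg : IsConvergent g) :
    ∃ C R : ℝ, 0 ≤ C ∧ 0 < R ∧ (∀ n, ‖PowerSeries.coeff n f‖ ≤ C * R ^ n) ∧
      ∀ n, ‖PowerSeries.coeff n g‖ ≤ C * R ^ n := by
  obtain ⟨C, R, hC, hR, h⟩ := exists_common_bound (f := ![f, g])
    (Fin.forall_fin_two.2 ⟨hf, hg⟩)
  exact ⟨C, R, hC, hR, fun n => h n 0, fun n => h n 1⟩

theorem add {f g : 𝕜⟦X⟧} (hf : IsConvergent f) (hg : IsConvergent g) : IsConvergent (f + g) := by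
  obtain ⟨C, R, -, hR, hf, hg⟩ := exists_common_bound₂ hf hg
  refine ⟨C + C, R, hR, fun n => ?_⟩
  rw [map_add, add_mul]
  exact norm_add_le_of_le (hf n) (hg n)

theorem mul {f g : 𝕜⟦X⟧} (hf : IsConvergent f) (hg : IsConvergent g) : IsConvergent (f * g) := by
  obtain ⟨C, R, hC, hR, hf, hg⟩ := exists_common_bound₂ hf hg
  refine ⟨C * C, 2 * R, by positivity, fun n => ?_⟩
  have hterm : ∀ p ∈ Finset.HasAntidiagonal.antidiagonal n,
      ‖PowerSeries.coeff p.1 f * PowerSeries.coeff p.2 g‖ ≤ C * C * R ^ n := fun p hp => by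
    rw [norm_mul, ← Finset.HasAntidiagonal.mem_antidiagonal.1 hp, pow_add, mul_mul_mul_comm]
    exact mul_le_mul (hf _) (hg _) (norm_nonneg _) (by positivity)
  have hcard : (n : ℝ) + 1 ≤ 2 ^ n := mod_cast Nat.lt_two_pow_self
  calc ‖PowerSeries.coeff n (f * g)‖
      ≤ ∑ _p ∈ Finset.HasAntidiagonal.antidiagonal n, C * C * R ^ n := by
        rw [PowerSeries.coeff_mul]
        exact norm_sum_le_of_le _ hterm
    _ = (n + 1) * (C * C * R ^ n) := by simp
    _ ≤ 2 ^ n * (C * C * R ^ n) := by gcongr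
    _ = C * C * (2 * R) ^ n := by rw [mul_pow]; ring

theorem C (a : 𝕜) : IsConvergent (PowerSeries.C a) := by
  refine ⟨‖a‖, 1, one_pos, fun n => ?_⟩
  rw [PowerSeries.coeff_C]
  split_ifs <;> simp

theorem of_X_pow_mul {f : 𝕜⟦X⟧} {k : ℕ} (hf : IsConvergent (PowerSeries.X ^ k * f)) :
    IsConvergent f := by
  obtain ⟨C, R, hR, h⟩ := hf
  refine ⟨C * R ^ k, R, hR, fun n => ?_⟩
  rw [mul_assoc, ← pow_add, add_comm k, ← PowerSeries.coeff_X_pow_mul f k n]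
  exact h (n + k)

theorem X : IsConvergent (PowerSeries.X : 𝕜⟦X⟧) := by
  refine ⟨1, 1, one_pos, fun n => ?_⟩
  rw [PowerSeries.coeff_X]
  split_ifs <;> simp

theorem inv {f : 𝕜⟦X⟧} (hf : IsConvergent f) : IsConvergent f⁻¹ := by
  by_cases h0 : PowerSeries.constantCoeff f = 0
  · rw [PowerSeries.inv_eq_zero.2 h0, ← map_zero PowerSeries.C]
    exact C 0
  obtain ⟨C, R, hC, hR, h⟩ := exists_common_bound (f := fun _ : Unit => f) fun _ => hf
  set a := ‖(PowerSeries.constantCoeff f)⁻¹‖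
  refine ⟨a, R * (1 + a * C), by positivity, le_mul_pow_of_succ_le_sum (norm_nonneg _)
    (by positivity) hR.le ?_ fun m => ?_⟩
  · rw [PowerSeries.coeff_zero_eq_constantCoeff_apply, PowerSeries.constantCoeff_inv]
  have hrec : PowerSeries.coeff (m + 1) f⁻¹ = -((PowerSeries.constantCoeff f)⁻¹ *
      ∑ k ∈ Finset.range (m + 1),
        PowerSeries.coeff (k + 1) f * PowerSeries.coeff (m - k) f⁻¹) := by
    have hcoeff := congrArg (PowerSeries.coeff (m + 1)) (PowerSeries.mul_inv_cancel f h0)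
    rw [PowerSeries.coeff_one, if_neg m.succ_ne_zero, PowerSeries.coeff_mul,
      Finset.Nat.sum_antidiagonal_eq_sum_range_succ_mk, Finset.sum_range_succ'] at hcoeff
    simp only [Nat.add_sub_add_right, Nat.sub_zero,
      PowerSeries.coeff_zero_eq_constantCoeff_apply] at hcoeff
    field_simp
    linear_combination hcoeff
  rw [hrec, norm_neg, Finset.mul_sum]
  refine norm_sum_le_of_le _ fun k _ => ?_
  rw [norm_mul, norm_mul, ← mul_assoc, mul_assoc a C]
  gcongr
  exact h _ ()

end IsConvergent

variable (𝕜) in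
/-- The ring `𝕜{X}` of convergent power series, as a subalgebra of `𝕜⟦X⟧`. -/
def convergentPowerSeries : Subalgebra 𝕜 𝕜⟦X⟧ where
  carrier := {f | IsConvergent f}
  add_mem' := IsConvergent.add
  mul_mem' := IsConvergent.mul
  algebraMap_mem' := IsConvergent.C

namespace convergentPowerSeries

/-- The variable of the ring of convergent power series. -/
noncomputable def X : convergentPowerSeries 𝕜 := ⟨PowerSeries.X, IsConvergent.X⟩

/-- The `n`-th coefficient of a convergent power series, as a linear map. -/
noncomputable def coeff (n : ℕ) : convergentPowerSeries 𝕜 →ₗ[𝕜] 𝕜 :=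
  PowerSeries.coeff n ∘ₗ (convergentPowerSeries 𝕜).val.toLinearMap

/-- The value at `0` of a convergent power series, as a ring homomorphism. -/
noncomputable def constantCoeff : convergentPowerSeries 𝕜 →+* 𝕜 :=
  PowerSeries.constantCoeff.comp (convergentPowerSeries 𝕜).val.toRingHom

theorem constantCoeff_algebraMap (a : 𝕜) :
    constantCoeff (algebraMap 𝕜 (convergentPowerSeries 𝕜) a) = a :=
  PowerSeries.constantCoeff_C a

theorem coeff_zero (f : convergentPowerSeries 𝕜) : coeff 0 f = constantCoeff f :=
  PowerSeries.coeff_zero_eq_constantCoeff_apply (f : 𝕜⟦X⟧)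

theorem X_mem_nonZeroDivisors : (X : convergentPowerSeries 𝕜) ∈ (convergentPowerSeries 𝕜)⁰ :=
  mem_nonZeroDivisors_of_ne_zero fun h => PowerSeries.X_ne_zero (congrArg Subtype.val h)

theorem exists_eq_X_pow_mul {f : convergentPowerSeries 𝕜} {k : ℕ}
    (hf : ∀ m < k, coeff m f = 0) :
    ∃ g : convergentPowerSeries 𝕜, f = X ^ k * g ∧ constantCoeff g = coeff k f := by
  obtain ⟨g, hg⟩ := PowerSeries.X_pow_dvd_iff.2 hf
  have hconv : IsConvergent (PowerSeries.X ^ k * g) := hg ▸ f.property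
  have hcoeff := PowerSeries.coeff_X_pow_mul g k 0
  rw [zero_add, PowerSeries.coeff_zero_eq_constantCoeff_apply, ← hg] at hcoeff
  exact ⟨⟨g, hconv.of_X_pow_mul⟩, Subtype.ext hg, hcoeff.symm⟩

theorem isUnit_of_constantCoeff_ne_zero {f : convergentPowerSeries 𝕜}
    (hf : constantCoeff f ≠ 0) : IsUnit f :=
  .of_mul_eq_one ⟨(f : 𝕜⟦X⟧)⁻¹, IsConvergent.inv f.2⟩
    (Subtype.ext (PowerSeries.mul_inv_cancel _ hf))

theorem mul_nonsing_inv_of_det_map_constantCoeff_ne_zero {n : Type*} [Fintype n] [DecidableEq n]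
    {N : Matrix n n (convergentPowerSeries 𝕜)} (hN : (N.map constantCoeff).det ≠ 0) :
    N * N⁻¹ = 1 := by
  refine mul_nonsing_inv N (isUnit_of_constantCoeff_ne_zero ?_)
  rwa [RingHom.map_det]

theorem coeff_X_sq_mul_algebraMap (n : ℕ) (a : 𝕜) :
    coeff n (X ^ 2 * algebraMap 𝕜 (convergentPowerSeries 𝕜) a) = if n = 2 then a else 0 := by
  change PowerSeries.coeff n (PowerSeries.X ^ 2 * PowerSeries.C a) = _
  rw [PowerSeries.coeff_mul_C, PowerSeries.coeff_X_pow, ite_mul, one_mul, zero_mul]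

theorem map_constantCoeff_map_algebraMap {m n : Type*} (A : Matrix m n 𝕜) :
    (A.map (algebraMap 𝕜 (convergentPowerSeries 𝕜))).map constantCoeff = A := by
  ext i j
  exact constantCoeff_algebraMap _

theorem map_constantCoeff_diagonal_one_X :
    (diagonal ![1, X] : Matrix _ _ (convergentPowerSeries 𝕜)).map constantCoeff =
      diagonal ![1, 0] := by
  rw [diagonal_map (map_zero _)]
  congr 1
  ext i
  fin_cases i
  exacts [map_one _, PowerSeries.constantCoeff_X]

theorem coeff_comp_mulVec {m n : Type*} [Fintype n] (M : Matrix m n (convergentPowerSeries 𝕜))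
    (t : n → convergentPowerSeries 𝕜) (k : ℕ) :
    coeff k ∘ (M *ᵥ t) =
      ∑ l ∈ Finset.range (k + 1), M.map (coeff l) *ᵥ (coeff (k - l) ∘ t) := by
  have hmul (f g : convergentPowerSeries 𝕜) :
      coeff k (f * g) = ∑ l ∈ Finset.range (k + 1), coeff l f * coeff (k - l) g :=
    (PowerSeries.coeff_mul k (f : 𝕜⟦X⟧) g).trans
      (Finset.Nat.sum_antidiagonal_eq_sum_range_succ_mk _ k)
  ext i
  simp only [Function.comp_apply, mulVec, dotProduct, map_sum, hmul, Finset.sum_apply, map_apply]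
  exact Finset.sum_comm

theorem exists_map_coeff_eq {m n : Type*} {M : ℕ → Matrix m n 𝕜}
    (hM : ∃ C ρ : ℝ, 0 < ρ ∧ ∀ k i j, ‖M k i j‖ ≤ C / ρ ^ k) :
    ∃ A : Matrix m n (convergentPowerSeries 𝕜), (fun k => A.map (coeff k)) = M := by
  obtain ⟨C, ρ, hρ, hbound⟩ := hM
  refine ⟨of fun i j => ⟨PowerSeries.mk fun k => M k i j, C, ρ⁻¹, inv_pos.2 hρ, fun k => ?_⟩, ?_⟩
  · rw [PowerSeries.coeff_mk, inv_pow, ← div_eq_mul_inv]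
    exact hbound k i j
  · ext k i j
    exact PowerSeries.coeff_mk k fun k => M k i j

theorem exists_coeff_bound {n : Type*} [Finite n] (t : n → convergentPowerSeries 𝕜) :
    ∃ C ρ : ℝ, 0 < ρ ∧ ∀ k i, ‖coeff k (t i)‖ ≤ C / ρ ^ k := by
  obtain ⟨C, R, -, hR, hbound⟩ := IsConvergent.exists_common_bound fun i => (t i).property
  refine ⟨C, R⁻¹, inv_pos.2 hR, fun k i => ?_⟩
  rw [inv_pow, div_inv_eq_mul]
  exact hbound k i

end convergentPowerSeries

end ConvergentPowerSeries

section DegenerateSystem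

open convergentPowerSeries

variable {𝕜 : Type*}

/-- The matrix `𝓜₀` of the paper, attached to the Taylor coefficients `M₀, M₁, M₂` of `M(z)`. -/
def reducedMatrix [CommSemiring 𝕜] (M : ℕ → Matrix (Fin 2) (Fin 2) 𝕜) (s r : Fin 2 → 𝕜) :
    Matrix (Fin 2) (Fin 2) 𝕜 :=
  !![s ⬝ᵥ M 2 *ᵥ s, s ⬝ᵥ M 1 *ᵥ r; r ⬝ᵥ M 1 *ᵥ s, r ⬝ᵥ M 0 *ᵥ r]

variable [NormedField 𝕜]

theorem coeff_conj_apply (M : Matrix (Fin 2) (Fin 2) (convergentPowerSeries 𝕜))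
    (s r : Fin 2 → 𝕜) (n : ℕ) (i j : Fin 2) :
    coeff n (((of ![s, r]).map (algebraMap 𝕜 (convergentPowerSeries 𝕜)) * M *
      (of ![s, r])ᵀ.map (algebraMap 𝕜 (convergentPowerSeries 𝕜))) i j) =
      ![s, r] i ⬝ᵥ M.map (coeff n) *ᵥ ![s, r] j := by
  have hmap := congrFun₂ (map_linearMap_mul_mul (coeff n) (of ![s, r]) M (of ![s, r])ᵀ) i j
  rw [Algebra.algebraMap_self, RingHom.coe_id, map_id, map_id, mul_mul_apply] at hmap
  exact hmap

variable {M : Matrix (Fin 2) (Fin 2) (convergentPowerSeries 𝕜)} {s r : Fin 2 → 𝕜}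

theorem exists_factorization (hMs : M.map (coeff 0) *ᵥ s = 0) (hsM : s ᵥ* M.map (coeff 0) = 0)
    (hsM₁s : s ⬝ᵥ M.map (coeff 1) *ᵥ s = 0) :
    ∃ N : Matrix (Fin 2) (Fin 2) (convergentPowerSeries 𝕜),
      N.map constantCoeff = reducedMatrix (fun n => M.map (coeff n)) s r ∧
      (of ![s, r]).map (algebraMap _ _) * M * (of ![s, r])ᵀ.map (algebraMap _ _) =
        diagonal ![X, 1] * N * diagonal ![X, 1] := by
  have hB := coeff_conj_apply M s r
  set B := (of ![s, r]).map (algebraMap _ (convergentPowerSeries 𝕜)) * M *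
    (of ![s, r])ᵀ.map (algebraMap _ _)
  have hsM₀ (v : Fin 2 → 𝕜) : s ⬝ᵥ M.map (coeff 0) *ᵥ v = 0 := by
    rw [dotProduct_mulVec, hsM, zero_dotProduct]
  obtain ⟨a, ha, ha₀⟩ := exists_eq_X_pow_mul (f := B 0 0) (k := 2) fun m hm => by
    rw [hB]
    interval_cases m
    exacts [hsM₀ s, hsM₁s]
  obtain ⟨b, hb, hb₀⟩ := exists_eq_X_pow_mul (f := B 0 1) (k := 1) fun m hm => by
    rw [hB, Nat.lt_one_iff.1 hm]
    exact hsM₀ r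
  obtain ⟨c, hc, hc₀⟩ := exists_eq_X_pow_mul (f := B 1 0) (k := 1) fun m hm => by
    rw [hB, Nat.lt_one_iff.1 hm]
    exact (congrArg _ hMs).trans (dotProduct_zero _)
  refine ⟨!![a, b; c, B 1 1], ?_, ?_⟩
  · have hd₀ : constantCoeff (B 1 1) = coeff 0 (B 1 1) := (coeff_zero _).symm
    rw [hB] at ha₀ hb₀ hc₀ hd₀
    ext i j
    fin_cases i <;> fin_cases j
    exacts [ha₀, hb₀, hc₀, hd₀]
  · rw [diagonal_mul_fin_two_mul_diagonal, ← ha, ← pow_one X, ← hb, ← hc]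
    exact eta_fin_two B

theorem det_ne_zero_of_det_reducedMatrix_ne_zero (hMs : M.map (coeff 0) *ᵥ s = 0)
    (hsM : s ᵥ* M.map (coeff 0) = 0) (hsM₁s : s ⬝ᵥ M.map (coeff 1) *ᵥ s = 0)
    (hdet : (reducedMatrix (fun n => M.map (coeff n)) s r).det ≠ 0) :
    (of ![s, r]).det ≠ 0 := by
  obtain ⟨N, hN₀, hfac⟩ := exists_factorization (r := r) hMs hsM hsM₁s
  have hN : N * N⁻¹ = 1 := mul_nonsing_inv_of_det_map_constantCoeff_ne_zero (by rwa [hN₀])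
  have hP : ((of ![s, r]).map (algebraMap 𝕜 (convergentPowerSeries 𝕜))).det ≠ 0 :=
    nonZeroDivisors.ne_zero <| det_left_mem_nonZeroDivisors_of_factorization
      X_mem_nonZeroDivisors hfac (diagonal_mul_diagonal_fin_two X) hN
  rw [← RingHom.mapMatrix_apply, ← RingHom.map_det] at hP
  exact fun h => hP (by rw [h, map_zero])

theorem exists_mulVec_eq_X_sq_smul (hMs : M.map (coeff 0) *ᵥ s = 0)
    (hsM : s ᵥ* M.map (coeff 0) = 0) (hsM₁s : s ⬝ᵥ M.map (coeff 1) *ᵥ s = 0)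
    (hdet : (reducedMatrix (fun n => M.map (coeff n)) s r).det ≠ 0)
    (w : Fin 2 → convergentPowerSeries 𝕜) :
    ∃ t : Fin 2 → convergentPowerSeries 𝕜, M *ᵥ t = (X ^ 2 : convergentPowerSeries 𝕜) • w ∧
      (fun i => constantCoeff (t i)) =
        ((s ⬝ᵥ fun i => constantCoeff (w i)) * (r ⬝ᵥ M.map (coeff 0) *ᵥ r) /
          (reducedMatrix (fun n => M.map (coeff n)) s r).det) • s := by
  obtain ⟨N, hN₀, hfac⟩ := exists_factorization (r := r) hMs hsM hsM₁s
  have hN : N * N⁻¹ = 1 := mul_nonsing_inv_of_det_map_constantCoeff_ne_zero (by rwa [hN₀])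
  set G := (of ![s, r])ᵀ.map (algebraMap 𝕜 _) * diagonal ![1, X] * N⁻¹ * diagonal ![1, X] *
    (of ![s, r]).map (algebraMap 𝕜 _) with hG
  have hMG : M * G = X ^ 2 • 1 := mul_eq_sq_smul_one_of_factorization X_mem_nonZeroDivisors hfac
    (diagonal_mul_diagonal_fin_two X) hN
  have hG₀ : G.map constantCoeff = (of ![s, r])ᵀ * diagonal ![1, 0] *
      (N.map constantCoeff)⁻¹ * diagonal ![1, 0] * of ![s, r] := by
    simp only [hG, Matrix.map_mul, map_constantCoeff_map_algebraMap,
      map_constantCoeff_diagonal_one_X, map_nonsing_inv_of_mul_eq_one constantCoeff hN]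
  refine ⟨G *ᵥ w, by rw [mulVec_mulVec, hMG, smul_mulVec, one_mulVec], ?_⟩
  have hmap : (fun i => constantCoeff ((G *ᵥ w) i)) =
      G.map constantCoeff *ᵥ fun i => constantCoeff (w i) :=
    funext fun i => RingHom.map_mulVec _ _ _ i
  rw [hmap, hG₀, conj_corner_nonsing_inv_mulVec, hN₀]
  rfl

end DegenerateSystem

open convergentPowerSeries in
theorem stmt_16_general {𝕜 : Type*} [NormedField 𝕜] (M : ℕ → Matrix (Fin 2) (Fin 2) 𝕜)
    (s r : Fin 2 → 𝕜)
    (hMconv : ∃ C ρ : ℝ, 0 < ρ ∧ ∀ n i j, ‖M n i j‖ ≤ C / ρ ^ n)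
    (hMs : M 0 *ᵥ s = 0) (hsM : s ᵥ* M 0 = 0) (hsr : s ⬝ᵥ r = 0) (hsM₁s : s ⬝ᵥ M 1 *ᵥ s = 0)
    (hdet : (reducedMatrix M s r).det ≠ 0) (hrM₀r : r ⬝ᵥ M 0 *ᵥ r ≠ 0) (α : 𝕜) :
    ∃ t : ℕ → Fin 2 → 𝕜,
      (∃ C ρ : ℝ, 0 < ρ ∧ ∀ n i, ‖t n i‖ ≤ C / ρ ^ n) ∧
      (∀ n, ∑ l ∈ Finset.range (n + 1), M l *ᵥ t (n - l) = if n = 2 then s + α • r else 0) ∧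
      t 0 = ((s ⬝ᵥ s) * (r ⬝ᵥ M 0 *ᵥ r) / (reducedMatrix M s r).det) • s ∧
      t 0 ≠ 0 := by
  obtain ⟨M, rfl⟩ := exists_map_coeff_eq hMconv
  have hss : s ⬝ᵥ s ≠ 0 := dotProduct_self_ne_zero_of_det_ne_zero
    (det_ne_zero_of_det_reducedMatrix_ne_zero hMs hsM hsM₁s hdet) hsr
  have hs : s ≠ 0 := fun h => hss (by rw [h, zero_dotProduct])
  obtain ⟨t, hMt, ht₀⟩ := exists_mulVec_eq_X_sq_smul hMs hsM hsM₁s hdet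
    (algebraMap 𝕜 _ ∘ (s + α • r))
  have hsw : s ⬝ᵥ (s + α • r) = s ⬝ᵥ s := by
    rw [dotProduct_add, dotProduct_smul, hsr, smul_zero, add_zero]
  simp only [Function.comp_apply, constantCoeff_algebraMap, hsw] at ht₀
  simp only [← coeff_zero] at ht₀
  refine ⟨fun n => coeff n ∘ t, exists_coeff_bound t, fun n => ?_, ht₀, ?_⟩
  · rw [← coeff_comp_mulVec, hMt]
    ext i
    exact (coeff_X_sq_mul_algebraMap n _).trans (by split_ifs <;> rfl)
  · exact ht₀.trans_ne
      (smul_ne_zero (div_ne_zero (mul_ne_zero hss hrM₀r) hdet) hs)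

/-- Case (ii) of Lemma 3.7: with additionally `sᵀM₂s = 0`, `rᵀM₀r ≠ 0`, and
`b(z) = z²(s + α r)`, the power-series solution of `M(z)t(z) = b(z)` has
nonzero leading coefficient
`t₀ = −(sᵀs)(rᵀM₀r) / ((sᵀM₁r)(rᵀM₁s)) • s`. -/
theorem stmt_16 (M : ℕ → Matrix (Fin 2) (Fin 2) ℂ)
    (s r : Fin 2 → ℂ) (hs : s ≠ 0) (hr : r ≠ 0)
    (hMconv : ∃ C ρ : ℝ, 0 < ρ ∧ ∀ n i j, ‖M n i j‖ ≤ C / ρ ^ n)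
    (hM0ne : M 0 ≠ 0)
    (hnull : ∀ v, (M 0).mulVec v = 0 ↔ ∃ c : ℂ, v = c • s)
    (hran : ∀ v, (∃ u, (M 0).mulVec u = v) ↔ ∃ c : ℂ, v = c • r)
    (hsr : s ⬝ᵥ r = 0)
    (hsM1s : s ⬝ᵥ (M 1).mulVec s = 0)
    (hM0inv : (!![s ⬝ᵥ (M 2).mulVec s, s ⬝ᵥ (M 1).mulVec r;
                 r ⬝ᵥ (M 1).mulVec s, r ⬝ᵥ (M 0).mulVec r]).det ≠ 0)
    (hsM2s : s ⬝ᵥ (M 2).mulVec s = 0)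
    (hrM0r : r ⬝ᵥ (M 0).mulVec r ≠ 0)
    (α : ℂ) (b : ℕ → Fin 2 → ℂ)
    (hb : b = fun n => if n = 2 then s + α • r else 0) :
    ∃ t : ℕ → Fin 2 → ℂ,
      (∃ C ρ : ℝ, 0 < ρ ∧ ∀ n i, ‖t n i‖ ≤ C / ρ ^ n) ∧
      (∀ n, ∑ l ∈ Finset.range (n + 1), (M l).mulVec (t (n - l)) = b n) ∧
      t 0 = (-((s ⬝ᵥ s) * (r ⬝ᵥ (M 0).mulVec r))
              / ((s ⬝ᵥ (M 1).mulVec r) * (r ⬝ᵥ (M 1).mulVec s))) • s ∧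
      t 0 ≠ 0 := by
  have hMs : M 0 *ᵥ s = 0 := (hnull s).2 ⟨1, (one_smul ℂ s).symm⟩
  have hsM : s ᵥ* M 0 = 0 :=
    vecMul_eq_zero_of_range_le_span (fun v => (hran _).1 ⟨v, rfl⟩) hsr
  have hdet : (reducedMatrix M s r).det = -((s ⬝ᵥ M 1 *ᵥ r) * (r ⬝ᵥ M 1 *ᵥ s)) := by
    rw [reducedMatrix, det_fin_two_of, hsM2s, zero_mul, zero_sub]
  rw [hb, neg_div, ← div_neg, ← hdet]
  exact stmt_16_general M s r hMconv hMs hsM hsr hsM1s hM0inv hrM0r α
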